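/- The discrete spectrum of the partial integral operator T = T₁ + T₂ coincides with the set D₀(T): σ_disc(T₁ + T₂) = D₀(T). -/

import Mathlib

open MeasureTheory Complex

noncomputable section

/-- The measure on `ℝ` given by restricting Lebesgue measure to `[a,b]`. -/
abbrev muI (a b : ℝ) : MeasureTheory.Measure ℝ :=
  MeasureTheory.volume.restrict (Set.Icc a b)

/-- The discrete spectrum of a bounded operator: the set of isolated points of the
spectrum which are eigenvalues of finite multiplicity. -/
def discreteSpectrum {E : Type*} [NormedAddCommGroup E] [NormedSpace ℂ E]
    (T : E →L[ℂ] E) : Set ℂ :=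
  {z : ℂ | z ∈ spectrum ℂ T ∧ nhdsWithin z (spectrum ℂ T \ {z}) = ⊥ ∧
    LinearMap.ker ((T - z • (1 : E →L[ℂ] E) : E →L[ℂ] E) : E →ₗ[ℂ] E) ≠ ⊥ ∧
    FiniteDimensional ℂ ↥(LinearMap.ker ((T - z • (1 : E →L[ℂ] E) : E →L[ℂ] E) : E →ₗ[ℂ] E))}

/-!
Operators of finite rank carry the argument. The product `T₁ T₂` has finite rank, and
`1 - τ (T₁ + T₂) = (1 - τ T₁) (1 - τ T₂) (1 - τ² W₁(τ))`, so when `τ⁻¹` is a resolvent point of both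
`T₁` and `T₂`, the last factor is the identity plus an operator of finite rank: it is invertible
exactly when it is injective, and otherwise `τ⁻¹` lies in the discrete spectrum, because a spectral
point of a normal operator is discrete as soon as some perturbation of finite rank moves it into
the resolvent set.

Conversely, modulo finite rank `T₁ + T₂` acts on functions `φ_k ⊗ g` as multiplication of `g` by
`h_k`, on functions `g ⊗ ψ_j` as multiplication of `g` by `p_j`, and on functions `u ⊗ g` with `u`
orthogonal to all `φ_k` as zero. Over an atomless measure every set of positive measure carries an
infinite-dimensional space of functions, so a multiplication operator that is invertible modulo
finite rank is invertible. Hence a point `l` of the discrete spectrum of `T₁ + T₂` is nonzero and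
lies in the resolvent sets of `T₁` and `T₂`.
-/

section FiniteRank

variable {𝕜 E F G : Type*} [NontriviallyNormedField 𝕜]
  [NormedAddCommGroup E] [NormedSpace 𝕜 E] [NormedAddCommGroup F] [NormedSpace 𝕜 F]
  [NormedAddCommGroup G] [NormedSpace 𝕜 G]

/-- The bounded operators with finite-dimensional range, as a subspace of all bounded operators. -/
def finiteRank (𝕜 E F : Type*) [NontriviallyNormedField 𝕜] [NormedAddCommGroup E]
    [NormedSpace 𝕜 E] [NormedAddCommGroup F] [NormedSpace 𝕜 F] : Submodule 𝕜 (E →L[𝕜] F) where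
  carrier := {A | FiniteDimensional 𝕜 A.range}
  zero_mem' := by
    change FiniteDimensional 𝕜 (0 : E →L[𝕜] F).range
    rw [ContinuousLinearMap.toLinearMap_zero, LinearMap.range_zero]
    infer_instance
  add_mem' {A B} (hA : FiniteDimensional 𝕜 A.range) (hB : FiniteDimensional 𝕜 B.range) :=
    Submodule.finiteDimensional_of_le (LinearMap.range_add_le (A : E →ₗ[𝕜] F) (B : E →ₗ[𝕜] F))
  smul_mem' c A (hA : FiniteDimensional 𝕜 A.range) := by
    refine Submodule.finiteDimensional_of_le (S₂ := A.range) ?_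
    rintro _ ⟨x, rfl⟩
    exact ⟨c • x, map_smul A c x⟩

theorem mem_finiteRank_iff {A : E →L[𝕜] F} : A ∈ finiteRank 𝕜 E F ↔ FiniteDimensional 𝕜 A.range :=
  Iff.rfl

theorem mem_finiteRank_of_range_le {A : E →L[𝕜] F} (V : Submodule 𝕜 F) [FiniteDimensional 𝕜 V]
    (hA : ∀ x, A x ∈ V) : A ∈ finiteRank 𝕜 E F :=
  mem_finiteRank_iff.2 <| Submodule.finiteDimensional_of_le (LinearMap.range_le_iff_comap.2 <|
    Submodule.eq_top_iff'.2 hA)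

theorem comp_mem_finiteRank_left (B : F →L[𝕜] G) {A : E →L[𝕜] F} (hA : A ∈ finiteRank 𝕜 E F) :
    B ∘L A ∈ finiteRank 𝕜 E G := by
  rw [mem_finiteRank_iff] at hA
  exact mem_finiteRank_of_range_le (A.range.map (B : F →ₗ[𝕜] G)) fun x => ⟨A x, ⟨x, rfl⟩, rfl⟩

theorem comp_mem_finiteRank_right {B : F →L[𝕜] G} (hB : B ∈ finiteRank 𝕜 F G) (A : E →L[𝕜] F) :
    B ∘L A ∈ finiteRank 𝕜 E G := by
  rw [mem_finiteRank_iff] at hB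
  exact mem_finiteRank_of_range_le B.range fun x => ⟨A x, rfl⟩

theorem finiteDimensional_ker_of_injective_add {A K : E →L[𝕜] F} (hK : K ∈ finiteRank 𝕜 E F)
    (hAK : Function.Injective (A + K)) : FiniteDimensional 𝕜 A.ker := by
  rw [mem_finiteRank_iff] at hK
  let f : A.ker →ₗ[𝕜] K.range := (K : E →ₗ[𝕜] F).rangeRestrict ∘ₗ A.ker.subtype
  refine FiniteDimensional.of_injective f fun x y hxy => Subtype.ext <| hAK ?_
  have hK : K x = K y := congrArg Subtype.val hxy
  have hx : A x = 0 := x.2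
  have hy : A y = 0 := y.2
  simp only [add_apply, hx, hy, hK]

section Fredholm

variable [CompleteSpace E]

theorem isUnit_one_add_of_injective {K : E →L[𝕜] E} (hK : K ∈ finiteRank 𝕜 E E)
    (hinj : Function.Injective ⇑(1 + K)) : IsUnit (1 + K) := by
  rw [mem_finiteRank_iff] at hK
  rw [ContinuousLinearMap.isUnit_iff_bijective]
  refine ⟨hinj, fun y => ?_⟩
  have hmaps : ∀ x ∈ K.range, (1 + K) x ∈ K.range := fun x hx =>
    K.range.add_mem hx ⟨x, rfl⟩
  have hsurj : Function.Surjective (((1 + K : E →L[𝕜] E) : E →ₗ[𝕜] E).restrict hmaps) :=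
    LinearMap.injective_iff_surjective.1 fun x x' hx =>
      Subtype.ext (hinj (congrArg Subtype.val hx))
  obtain ⟨x, hx⟩ := hsurj ⟨K y, y, rfl⟩
  have hx : x + K x = K y := congrArg Subtype.val hx
  refine ⟨y - x, ?_⟩
  simp only [add_apply, one_apply_eq_self, map_sub]
  rw [← hx]
  abel

theorem isUnit_add_iff_injective {A K : E →L[𝕜] E} (hA : IsUnit A) (hK : K ∈ finiteRank 𝕜 E E) :
    IsUnit (A + K) ↔ Function.Injective (A + K) := by
  refine ⟨fun h => (ContinuousLinearMap.isUnit_iff_bijective.1 h).1, fun h => ?_⟩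
  obtain ⟨u, rfl⟩ := hA
  have hfactor : (u : E →L[𝕜] E) + K = u * (1 + ↑u⁻¹ * K) := by
    rw [mul_add, mul_one, Units.mul_inv_cancel_left]
  rw [hfactor] at h ⊢
  have hinj : Function.Injective ⇑(1 + ↑u⁻¹ * K) :=
    Function.Injective.of_comp (f := (u : E →L[𝕜] E)) h
  exact u.isUnit.mul (isUnit_one_add_of_injective (comp_mem_finiteRank_left _ hK) hinj)

end Fredholm

end FiniteRank

section DiscreteSpectrum

open Filter Topology

theorem eventually_isUnit_sub_algebraMap_of_isIdempotentElem {𝕜 A : Type*} [NormedField 𝕜]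
    [NormedRing A] [NormedAlgebra 𝕜 A] [HasSummableGeomSeries A] {a p : A}
    (hp : IsIdempotentElem p) (hap : a * p = 0) (hu : IsUnit (a + p)) :
    ∀ᶠ z in 𝓝[≠] (0 : 𝕜), IsUnit (a - algebraMap 𝕜 A z) := by
  have hnear : ∀ᶠ z in 𝓝 (0 : 𝕜), IsUnit (a + p - algebraMap 𝕜 A z) := by
    have hcont : Continuous fun z : 𝕜 => a + p - algebraMap 𝕜 A z :=
      continuous_const.sub (continuous_algebraMap 𝕜 A)
    refine hcont.continuousAt.eventually (Units.isOpen.mem_nhds ?_)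
    change IsUnit (a + p - algebraMap 𝕜 A 0)
    rwa [map_zero, sub_zero]
  have hone : ∀ᶠ z in 𝓝 (0 : 𝕜), z ≠ 1 := isOpen_ne.mem_nhds zero_ne_one
  filter_upwards [nhdsWithin_le_nhds hnear, nhdsWithin_le_nhds hone, self_mem_nhdsWithin]
    with z hz hz1 hz0
  have hz1' : 1 - z ≠ 0 := sub_ne_zero.2 hz1.symm
  have hcompl : IsUnit (algebraMap 𝕜 A (1 - z) - p) := by
    by_contra hmem
    rcases hp.spectrum_subset 𝕜 hmem with h | h
    · exact hz1' h
    · exact hz0 (sub_eq_self.1 h)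
  have hfactor : (a + p - algebraMap 𝕜 A z) * (algebraMap 𝕜 A (1 - z) - p)
      = algebraMap 𝕜 A (1 - z) * (a - algebraMap 𝕜 A z) := by
    have h : algebraMap 𝕜 A (1 - z) = 1 - algebraMap 𝕜 A z := by rw [map_sub, map_one]
    have hc := Algebra.commutes z a
    have hc' := Algebra.commutes z p
    have hpp : p * p = p := hp
    rw [h]
    simp only [mul_sub, sub_mul, add_mul, mul_one, one_mul, hap, hpp, hc, hc']
    abel
  have hscalar := (IsUnit.mk0 _ hz1').map (algebraMap 𝕜 A)
  exact (hscalar.unit.isUnit_units_mul _).1 (hfactor ▸ hz.mul hcompl)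

variable {H : Type*} [NormedAddCommGroup H] [InnerProductSpace ℂ H] [CompleteSpace H]
  {T : H →L[ℂ] H} {l : ℂ}

theorem mem_resolventSet_iff_isUnit_sub {R A : Type*} [CommRing R] [Ring A] [Algebra R A]
    {r : R} {a : A} : r ∈ resolventSet R a ↔ IsUnit (a - algebraMap R A r) := by
  rw [spectrum.mem_resolventSet_iff, IsUnit.sub_iff]

theorem exists_finiteRank_of_mem_discreteSpectrum [IsStarNormal T]
    (hl : l ∈ discreteSpectrum T) : ∃ K ∈ finiteRank ℂ H H, l ∈ resolventSet ℂ (T + K) := by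
  classical
  obtain ⟨-, hisol, -, hfin⟩ := hl
  let e : ℂ → ℂ := fun z => if z = l then 1 else 0
  have he : ContinuousOn e (spectrum ℂ T) := by
    intro z _
    by_cases hzl : z = l
    · rw [hzl, ← continuousWithinAt_sdiff_self, ContinuousWithinAt, hisol]
      exact tendsto_bot
    · have hzero : e =ᶠ[𝓝 z] fun _ => 0 := by
        filter_upwards [isOpen_ne.mem_nhds hzl] with w hw using if_neg hw
      exact (continuousAt_const.congr hzero.symm).continuousWithinAt
  have hsub : cfc (fun z => z - l) T = T - l • (1 : H →L[ℂ] H) := by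
    rw [cfc_sub (fun z => z) (fun _ => l) T, cfc_id' ℂ T, cfc_const l T,
      Algebra.algebraMap_eq_smul_one]
  refine ⟨cfc e T, ?_, ?_⟩
  · have hmul : (T - l • (1 : H →L[ℂ] H)) * cfc e T = 0 := by
      have hzero : (fun z => (z - l) * e z) = fun _ => 0 := by
        funext z
        by_cases hzl : z = l <;> simp [e, hzl]
      rw [← hsub, ← cfc_mul (fun z => z - l) e T (by fun_prop) he, hzero, cfc_const_zero]
    exact mem_finiteRank_of_range_le
      (T - l • (1 : H →L[ℂ] H)).ker fun x => DFunLike.congr_fun hmul x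
  · have hunit : IsUnit (cfc (fun z => z - l + e z) T) := by
      rw [isUnit_cfc_iff _ _ (by fun_prop)]
      intro z _
      by_cases hzl : z = l <;> simp [e, hzl, sub_eq_zero]
    rw [cfc_add T (fun z => z - l) e (by fun_prop) he, hsub] at hunit
    rwa [mem_resolventSet_iff_isUnit_sub, Algebra.algebraMap_eq_smul_one, add_sub_right_comm]

theorem isStarNormal_sub_algebraMap {A : Type*} [Ring A] [StarRing A] [Algebra ℂ A]
    [StarModule ℂ A] (a : A) [IsStarNormal a] (z : ℂ) : IsStarNormal (a - algebraMap ℂ A z) where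
  star_comm_self := by
    rw [star_sub, ← algebraMap_star_comm]
    have hcomm : Commute (star a) a := star_comm_self
    exact (hcomm.sub_left (Algebra.commutes _ _)).sub_right (Algebra.commutes _ _).symm

theorem nhdsWithin_spectrum_sdiff_eq_bot {A : Type*} [NormedRing A] [NormedAlgebra ℂ A]
    [HasSummableGeomSeries A] {a p : A} {z : ℂ} (hp : IsIdempotentElem p)
    (hap : (a - algebraMap ℂ A z) * p = 0) (hu : IsUnit (a - algebraMap ℂ A z + p)) :
    𝓝[spectrum ℂ a \ {z}] z = ⊥ := by
  have hshift : Tendsto (· - z) (𝓝[≠] z) (𝓝[≠] 0) := by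
    rw [Tendsto, map_subRight_nhdsNE, sub_self]
  have hnear := hshift.eventually
    (eventually_isUnit_sub_algebraMap_of_isIdempotentElem (𝕜 := ℂ) hp hap hu)
  rw [Set.sdiff_eq, Set.inter_comm, nhdsWithin_inter', ← disjoint_iff, disjoint_principal_right]
  filter_upwards [hnear] with w hw
  rw [map_sub, sub_sub_sub_cancel_right, ← mem_resolventSet_iff_isUnit_sub] at hw
  exact fun hmem => hmem hw

theorem starProjection_ker_mul_of_isStarNormal {A : H →L[ℂ] H} (hA : IsStarNormal A)
    [A.ker.HasOrthogonalProjection] : A.ker.starProjection * A = 0 := by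
  ext x
  have hx : A x ∈ A.kerᗮ := by
    rw [← ContinuousLinearMap.IsStarNormal.orthogonal_range hA]
    exact A.range.le_orthogonal_orthogonal ⟨x, rfl⟩
  rw [← A.ker.ker_starProjection] at hx
  exact hx

theorem injective_add_starProjection_ker {A : H →L[ℂ] H} (hA : IsStarNormal A)
    [A.ker.HasOrthogonalProjection] : Function.Injective ⇑(A + A.ker.starProjection) := by
  rw [injective_iff_map_eq_zero]
  intro x hx
  have hPP := A.ker.isIdempotentElem_starProjection.eq
  have hPx : A.ker.starProjection x = 0 := by
    have hmul : A.ker.starProjection * (A + A.ker.starProjection) = A.ker.starProjection := by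
      rw [mul_add, starProjection_ker_mul_of_isStarNormal hA, zero_add, hPP]
    rw [← hmul, mul_apply_eq_comp, hx, map_zero]
  rw [add_apply, hPx, add_zero] at hx
  exact (Submodule.starProjection_eq_self_iff.2 hx).symm.trans hPx

theorem mem_discreteSpectrum_of_finiteRank [IsStarNormal T] (hl : l ∈ spectrum ℂ T)
    {K : H →L[ℂ] H} (hK : K ∈ finiteRank ℂ H H) (hTK : l ∈ resolventSet ℂ (T + K)) :
    l ∈ discreteSpectrum T := by
  rw [mem_resolventSet_iff_isUnit_sub, add_sub_right_comm] at hTK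
  have hA := isStarNormal_sub_algebraMap T l
  have hfin := finiteDimensional_ker_of_injective_add hK
    (ContinuousLinearMap.isUnit_iff_bijective.1 hTK).1
  set A := T - algebraMap ℂ (H →L[ℂ] H) l with hAdef
  let P := A.ker.starProjection
  have hP : P ∈ finiteRank ℂ H H :=
    mem_finiteRank_of_range_le A.ker A.ker.starProjection_apply_mem
  have hAP : A * P = 0 := ContinuousLinearMap.ext A.ker.starProjection_apply_mem
  have hunit : IsUnit (A + P) := by
    have hinj : Function.Injective ⇑(A + P) := injective_add_starProjection_ker hA
    have hdecomp : A + P = A + K + (P - K) := by abel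
    rw [hdecomp] at hinj ⊢
    exact (isUnit_add_iff_injective hTK (sub_mem hP hK)).2 hinj
  have hker : A.ker ≠ ⊥ := by
    intro hbot
    have hzero : P = 0 := by simp only [P, hbot, Submodule.starProjection_bot]
    rw [hzero, add_zero] at hunit
    exact hl (mem_resolventSet_iff_isUnit_sub.2 hunit)
  have hisol := nhdsWithin_spectrum_sdiff_eq_bot A.ker.isIdempotentElem_starProjection hAP hunit
  rw [hAdef, Algebra.algebraMap_eq_smul_one] at hker hfin
  exact ⟨hl, hisol, hker, hfin⟩

theorem mem_discreteSpectrum_iff_exists_finiteRank [IsStarNormal T] :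
    l ∈ discreteSpectrum T ↔
      l ∈ spectrum ℂ T ∧ ∃ K ∈ finiteRank ℂ H H, l ∈ resolventSet ℂ (T + K) :=
  ⟨fun hl => ⟨hl.1, exists_finiteRank_of_mem_discreteSpectrum hl⟩,
    fun ⟨hl, _, hK, hTK⟩ => mem_discreteSpectrum_of_finiteRank hl hK hTK⟩

theorem one_sub_smul_add_eq_mul {R A : Type*} [CommRing R] [Ring A] [Algebra R A] {t : R}
    {a b s w : A} (hs : (1 - t • a) * s = a) (hw : (1 - t • b) * w = s * b) :
    1 - t • (a + b) = (1 - t • a) * (1 - t • b) * (1 - t ^ 2 • w) := by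
  have hab : (1 - t • a) * (1 - t • b) * w = a * b := by rw [mul_assoc, hw, ← mul_assoc, hs]
  rw [mul_sub, mul_one, mul_smul_comm, hab, mul_sub, mul_one, sub_mul, one_mul, smul_mul_smul_comm,
    smul_add, pow_two]
  abel

theorem inv_mem_resolventSet_iff {𝕜 A : Type*} [Field 𝕜] [Ring A] [Algebra 𝕜 A] {t : 𝕜}
    (ht : t ≠ 0) {a : A} : t⁻¹ ∈ resolventSet 𝕜 a ↔ IsUnit (1 - t • a) := by
  rw [spectrum.mem_resolventSet_iff, Algebra.algebraMap_eq_smul_one]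
  have hscale : 1 - t • a = (Units.mk0 t ht) • (t⁻¹ • (1 : A) - a) := by
    rw [Units.smul_def, Units.val_mk0, smul_sub, smul_inv_smul₀ ht]
  rw [hscale, isUnit_smul_iff]

theorem inv_mem_discreteSpectrum_add_iff {T₁ T₂ S W : H →L[ℂ] H} {τ : ℂ}
    [IsStarNormal (T₁ + T₂)] (hfin : T₁ * T₂ ∈ finiteRank ℂ H H) (hτ : τ ≠ 0)
    (hT₁ : τ⁻¹ ∈ resolventSet ℂ T₁) (hT₂ : τ⁻¹ ∈ resolventSet ℂ T₂)
    (hS : (1 - τ • T₁) * S = T₁) (hW : (1 - τ • T₂) * W = S * T₂) :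
    τ⁻¹ ∈ discreteSpectrum (T₁ + T₂) ↔ ∃ g, g ≠ 0 ∧ (τ ^ 2 • W) g = g := by
  have hfactor := one_sub_smul_add_eq_mul hS hW
  rw [mem_discreteSpectrum_iff_exists_finiteRank]
  rw [inv_mem_resolventSet_iff hτ] at hT₁ hT₂
  have hU := hT₁.mul hT₂
  have hUadd : (1 - τ • T₁) * (1 - τ • T₂) = 1 - τ • (T₁ + T₂ + -τ • (T₁ * T₂)) := by
    rw [mul_sub, mul_one, sub_mul, one_mul, smul_mul_smul_comm]
    module
  have hK : ∃ K ∈ finiteRank ℂ H H, τ⁻¹ ∈ resolventSet ℂ (T₁ + T₂ + K) := by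
    refine ⟨-τ • (T₁ * T₂), Submodule.smul_mem _ _ hfin, ?_⟩
    rwa [inv_mem_resolventSet_iff hτ, ← hUadd]
  have hWfin : -(τ ^ 2 • W) ∈ finiteRank ℂ H H := by
    obtain ⟨u, hu⟩ := hU
    have hW' : W = ↑u⁻¹ * (T₁ * T₂) := by
      rw [Units.eq_inv_mul_iff_mul_eq, hu, mul_assoc, hW, ← mul_assoc, hS]
    rw [hW']
    exact neg_mem (Submodule.smul_mem _ _ (comp_mem_finiteRank_left _ hfin))
  have hunit : IsUnit (1 - τ • (T₁ + T₂)) ↔ Function.Injective ⇑(1 + -(τ ^ 2 • W)) := by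
    rw [hfactor, ← isUnit_add_iff_injective isUnit_one hWfin, ← sub_eq_add_neg]
    exact hU.unit.isUnit_units_mul _
  rw [and_iff_left hK, spectrum.mem_iff, ← spectrum.mem_resolventSet_iff,
    inv_mem_resolventSet_iff hτ, hunit, injective_iff_map_eq_zero]
  push Not
  refine exists_congr fun g => ?_
  rw [and_comm, add_apply, neg_apply, one_apply_eq_self, ← sub_eq_add_neg, sub_eq_zero,
    eq_comm (a := g)]

end DiscreteSpectrum

section Amplification

variable {𝕜 G H ι : Type*} [NontriviallyNormedField 𝕜]
  [NormedAddCommGroup G] [NormedSpace 𝕜 G] [NormedAddCommGroup H] [NormedSpace 𝕜 H]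

theorem exists_mul_sub_one_mem_finiteRank {T K : H →L[𝕜] H} {J : G →L[𝕜] H} {V : H →L[𝕜] G}
    {M : G →L[𝕜] G} {l : 𝕜} (hVJ : V ∘L J = 1) (hTJ : T ∘L J - J ∘L M ∈ finiteRank 𝕜 G H)
    (hK : K ∈ finiteRank 𝕜 H H) (hTK : l ∈ resolventSet 𝕜 (T + K)) :
    ∃ C : G →L[𝕜] G, C * (M - algebraMap 𝕜 (G →L[𝕜] G) l) - 1 ∈ finiteRank 𝕜 G G := by
  obtain ⟨R, hR⟩ := (mem_resolventSet_iff_isUnit_sub.1 hTK).exists_left_inv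
  refine ⟨V ∘L R ∘L J, ?_⟩
  have hdefect : V ∘L R ∘L J * (M - algebraMap 𝕜 (G →L[𝕜] G) l) - 1
      = -((V ∘L R) ∘L ((T ∘L J - J ∘L M) + K ∘L J)) := by
    ext x
    have hRx : R (T (J x)) + R (K (J x)) - l • R (J x) = J x := by
      simpa [Algebra.algebraMap_eq_smul_one] using DFunLike.congr_fun hR (J x)
    have hVJx : V (J x) = x := DFunLike.congr_fun hVJ x
    have hVR := congrArg V hRx
    simp only [map_add, map_sub, map_smul, hVJx] at hVR
    simp only [Algebra.algebraMap_eq_smul_one, sub_apply, mul_apply_eq_comp, smul_apply,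
      one_apply_eq_self, neg_apply, add_apply, ContinuousLinearMap.comp_apply, map_sub, map_add,
      map_smul]
    linear_combination (norm := module) hVR
  rw [hdefect]
  exact neg_mem (comp_mem_finiteRank_left _ (add_mem hTJ (comp_mem_finiteRank_right hK J)))

variable [DecidableEq ι]

theorem apply_apply_eq_ite {J : ι → G →L[𝕜] H} {V : ι → H →L[𝕜] G}
    (hVJ : ∀ i j, V i ∘L J j = if i = j then 1 else 0) (i j : ι) (x : G) :
    V i (J j x) = if i = j then x else 0 := by
  rw [← ContinuousLinearMap.comp_apply, hVJ]
  split_ifs <;> rfl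

variable [Fintype ι]

/-- For maps `J i : G → H` that embed copies of `G` as a direct sum of closed subspaces of `H`,
with left inverses `V i`, the algebra homomorphism taking a family of operators on `G` to the
operator on `H` that acts as `M i` on the range of `J i` and vanishes on the joint kernel of the
`V i`. -/
def amplification (J : ι → G →L[𝕜] H) (V : ι → H →L[𝕜] G)
    (hVJ : ∀ i j, V i ∘L J j = if i = j then 1 else 0) :
    (ι → G →L[𝕜] G) →ₙₐ[𝕜] (H →L[𝕜] H) where
  toFun M := ∑ i, J i ∘L M i ∘L V i
  map_smul' c M := by
    simp only [Pi.smul_apply, ContinuousLinearMap.smul_comp, ContinuousLinearMap.comp_smul,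
      Finset.smul_sum, MonoidHom.id_apply]
  map_zero' := by
    simp only [Pi.zero_apply, ContinuousLinearMap.zero_comp, ContinuousLinearMap.comp_zero,
      Finset.sum_const_zero]
  map_add' M N := by
    simp only [Pi.add_apply, ContinuousLinearMap.add_comp, ContinuousLinearMap.comp_add,
      Finset.sum_add_distrib]
  map_mul' M N := by
    have hcomp : ∀ i, (J i ∘L M i ∘L V i) * ∑ j, J j ∘L N j ∘L V j = J i ∘L (M i * N i) ∘L V i := by
      intro i
      ext x
      simp only [mul_apply_eq_comp, sum_apply, ContinuousLinearMap.comp_apply,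
        map_sum, apply_apply_eq_ite hVJ]
      simp only [← map_sum, Finset.sum_ite_eq, Finset.mem_univ, if_true]
    simp only [Finset.sum_mul, hcomp, Pi.mul_apply]

variable {J : ι → G →L[𝕜] H} {V : ι → H →L[𝕜] G}
  (hVJ : ∀ i j, V i ∘L J j = if i = j then 1 else 0)

theorem amplification_apply (M : ι → G →L[𝕜] G) :
    amplification J V hVJ M = ∑ i, J i ∘L M i ∘L V i :=
  rfl

theorem amplification_comp (M : ι → G →L[𝕜] G) (j : ι) :
    amplification J V hVJ M ∘L J j = J j ∘L M j := by
  ext x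
  simp only [amplification_apply, ContinuousLinearMap.comp_apply, sum_apply,
    apply_apply_eq_ite hVJ, apply_ite, map_zero, Finset.sum_ite_eq', Finset.mem_univ, if_true]

theorem amplification_comp_mem_finiteRank {F : Type*} [NormedAddCommGroup F] [NormedSpace 𝕜 F]
    (M : ι → G →L[𝕜] G) {A : F →L[𝕜] H} (hA : ∀ i, V i ∘L A ∈ finiteRank 𝕜 F G) :
    amplification J V hVJ M ∘L A ∈ finiteRank 𝕜 F H := by
  have hsum : amplification J V hVJ M ∘L A = ∑ i, (J i ∘L M i) ∘L V i ∘L A := by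
    ext x
    simp [amplification_apply]
  rw [hsum]
  exact sum_mem fun i _ => comp_mem_finiteRank_left _ (hA i)

theorem comp_amplification_mem_finiteRank {F : Type*} [NormedAddCommGroup F] [NormedSpace 𝕜 F]
    (M : ι → G →L[𝕜] G) {A : H →L[𝕜] F} (hA : ∀ i, A ∘L J i ∈ finiteRank 𝕜 G F) :
    A ∘L amplification J V hVJ M ∈ finiteRank 𝕜 H F := by
  have hsum : A ∘L amplification J V hVJ M = ∑ i, (A ∘L J i) ∘L M i ∘L V i := by
    ext x
    simp [amplification_apply]
  rw [hsum]
  exact sum_mem fun i _ => comp_mem_finiteRank_right (hA i) _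

theorem mem_resolventSet_amplification {M : ι → G →L[𝕜] G} {l : 𝕜} (hl : l ≠ 0)
    (hM : ∀ i, l ∈ resolventSet 𝕜 (M i)) : l ∈ resolventSet 𝕜 (amplification J V hVJ M) := by
  by_contra hmem
  have hquasi := NonUnitalAlgHom.quasispectrum_apply_subset (R := 𝕜) (amplification J V hVJ) M
    (spectrum_subset_quasispectrum 𝕜 _ hmem)
  rw [quasispectrum_eq_spectrum_union_zero, Pi.spectrum_eq] at hquasi
  rcases hquasi with h | h
  · obtain ⟨i, hi⟩ := Set.mem_iUnion.1 h
    exact hi (hM i)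
  · exact hl h

theorem one_sub_smul_mul_amplification {M R : ι → G →L[𝕜] G} {t : 𝕜}
    (hR : ∀ i, (1 - t • M i) * R i = M i) :
    (1 - t • amplification J V hVJ M) * amplification J V hVJ R = amplification J V hVJ M := by
  have hR' : R - t • (M * R) = M := by
    funext i
    have hRi := hR i
    rw [sub_mul, one_mul, smul_mul_assoc] at hRi
    exact hRi
  rw [sub_mul, one_mul, smul_mul_assoc, ← map_mul, ← map_smul, ← map_sub, hR']

end Amplification

section InfiniteDimensional

open Polynomial
open scoped ENNReal

variable {Y : Type*} [MeasurableSpace Y] {ν : Measure Y}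

theorem exists_measurable_injective_norm_le_one (Y : Type*) [MeasurableSpace Y]
    [StandardBorelSpace Y] :
    ∃ e : Y → ℂ, Measurable e ∧ Function.Injective e ∧ ∀ y, ‖e y‖ ≤ 1 := by
  have hg := measurableEmbedding_sigmoid_comp_embeddingReal Y
  refine ⟨fun y => ((unitInterval.sigmoid (embeddingReal Y y) : ℝ) : ℂ),
    Complex.measurable_ofReal.comp (measurable_subtype_coe.comp hg.measurable),
    Complex.ofReal_injective.comp (Subtype.val_injective.comp hg.injective), fun y => ?_⟩
  rw [Complex.norm_real, Real.norm_of_nonneg (unitInterval.nonneg _)]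
  exact unitInterval.le_one _

theorem memLp_indicator_eval {e : Y → ℂ} (he : Measurable e) (hbd : ∀ y, ‖e y‖ ≤ 1) {A : Set Y}
    (hA : MeasurableSet A) (hA_top : ν A ≠ ∞) (r : ℝ≥0∞) (q : ℂ[X]) :
    MemLp (A.indicator fun y => q.eval (e y)) r ν := by
  obtain ⟨C, hC⟩ := (isCompact_closedBall (0 : ℂ) 1).exists_bound_of_continuousOn
    q.continuous.continuousOn
  have : IsFiniteMeasure (ν.restrict A) := isFiniteMeasure_restrict.2 hA_top
  rw [memLp_indicator_iff_restrict hA]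
  exact MemLp.of_bound (q.continuous.measurable.comp he).aestronglyMeasurable C
    (ae_of_all _ fun y => hC _ (mem_closedBall_zero_iff.2 (hbd y)))

theorem measure_eq_zero_of_ae_indicator_eval_eq_zero [NullSingletonClass ν] {e : Y → ℂ}
    (he : Function.Injective e) {A : Set Y} {q : ℂ[X]} (hq : q ≠ 0)
    (hzero : ∀ᵐ y ∂ν, A.indicator (fun y => q.eval (e y)) y = 0) : ν A = 0 := by
  have hroots : (e ⁻¹' {z | q.IsRoot z}).Finite :=
    (finite_setOfPred_isRoot hq).preimage he.injOn
  rw [measure_eq_zero_iff_ae_notMem]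
  filter_upwards [hzero, measure_eq_zero_iff_ae_notMem.1 (hroots.measure_zero ν)]
    with y hy hroot hyA
  rw [Set.indicator_of_mem hyA] at hy
  exact hroot hy

theorem exists_ne_zero_ae_eq_zero_off [StandardBorelSpace Y] [SigmaFinite ν]
    [NullSingletonClass ν] {A : Set Y}
    (hA : MeasurableSet A) (hA0 : ν A ≠ 0) {r : ℝ≥0∞} {V : Type*} [AddCommGroup V] [Module ℂ V]
    [FiniteDimensional ℂ V] (L : Lp ℂ r ν →ₗ[ℂ] V) :
    ∃ g : Lp ℂ r ν, g ≠ 0 ∧ L g = 0 ∧ ∀ᵐ y ∂ν, y ∉ A → g y = 0 := by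
  obtain ⟨B, hB, hBA, hB0, hB_top⟩ := Measure.exists_subset_measure_lt_top hA hA0.bot_lt
  obtain ⟨e, he_meas, he_inj, he_bd⟩ := exists_measurable_injective_norm_le_one Y
  have hmem := memLp_indicator_eval he_meas he_bd hB hB_top.ne r
  let Q : ℂ[X] →ₗ[ℂ] Lp ℂ r ν :=
    { toFun := fun q => (hmem q).toLp
      map_add' := fun q q' => by
        rw [← MemLp.toLp_add]
        exact MemLp.toLp_congr _ _ (ae_of_all _ fun y => by by_cases hy : y ∈ B <;> simp [hy])
      map_smul' := fun c q => by
        rw [RingHom.id_apply, ← MemLp.toLp_const_smul]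
        exact MemLp.toLp_congr _ _ (ae_of_all _ fun y => by by_cases hy : y ∈ B <;> simp [hy]) }
  have hLQ : ¬ Function.Injective (L ∘ₗ Q) := fun hinj =>
    Polynomial.not_finite (Module.Finite.of_injective (L ∘ₗ Q) hinj)
  rw [injective_iff_map_eq_zero] at hLQ
  push Not at hLQ
  obtain ⟨q, hLq, hq⟩ := hLQ
  refine ⟨Q q, fun hQq => hB0.ne' ?_, hLq, ?_⟩
  · refine measure_eq_zero_of_ae_indicator_eval_eq_zero he_inj hq ?_
    filter_upwards [(hmem q).coeFn_toLp, Lp.eq_zero_iff_ae_eq_zero.1 hQq] with y hy hy'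
    exact hy.symm.trans hy'
  · filter_upwards [(hmem q).coeFn_toLp] with y hy hyA
    exact hy.trans (Set.indicator_of_notMem (fun hyB => hyA (hBA hyB)) _)

end InfiniteDimensional

section MulOp

open scoped ENNReal

variable {Y : Type*} [MeasurableSpace Y] {ν : Measure Y}

/-- Multiplication by an essentially bounded function, as a bounded operator on `L²`. -/
def mulOp (ν : Measure Y) : Lp ℂ ∞ ν →L[ℂ] Lp ℂ 2 ν →L[ℂ] Lp ℂ 2 ν :=
  (ContinuousLinearMap.mul ℂ ℂ).holderL ν ∞ 2 2

theorem coeFn_mulOp (h : Lp ℂ ∞ ν) (g : Lp ℂ 2 ν) : mulOp ν h g =ᵐ[ν] fun y => h y * g y :=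
  (ContinuousLinearMap.mul ℂ ℂ).coeFn_holder h g

theorem coeFn_mulOp_sub_algebraMap (h : Lp ℂ ∞ ν) (l : ℂ) (g : Lp ℂ 2 ν) :
    (mulOp ν h - algebraMap ℂ (Lp ℂ 2 ν →L[ℂ] Lp ℂ 2 ν) l) g =ᵐ[ν] fun y => (h y - l) * g y := by
  rw [Algebra.algebraMap_eq_smul_one, sub_apply, smul_apply, one_apply_eq_self]
  filter_upwards [coeFn_mulOp h g, Lp.coeFn_sub (mulOp ν h g) (l • g), Lp.coeFn_smul l g]
    with y hmul hsub hsmul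
  rw [hsub, Pi.sub_apply, hmul, hsmul, Pi.smul_apply, smul_eq_mul, sub_mul]

theorem mem_resolventSet_mulOp {h : Lp ℂ ∞ ν} {l : ℂ} {ε : ℝ} (hε : 0 < ε)
    (hbound : ∀ᵐ y ∂ν, ε ≤ ‖h y - l‖) : l ∈ resolventSet ℂ (mulOp ν h) := by
  have hmem : MemLp (fun y => (h y - l)⁻¹) ∞ ν := by
    refine memLp_top_of_bound
      (((Lp.aestronglyMeasurable h).aemeasurable.sub_const l).inv).aestronglyMeasurable ε⁻¹ ?_
    filter_upwards [hbound] with y hy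
    rw [norm_inv]
    gcongr
  have hinv : ∀ g : Lp ℂ 2 ν, ∀ᵐ y ∂ν, mulOp ν hmem.toLp g y = (h y - l)⁻¹ * g y := fun g => by
    filter_upwards [coeFn_mulOp hmem.toLp g, hmem.coeFn_toLp] with y hy hy'
    rw [hy, hy']
  have hne : ∀ᵐ y ∂ν, h y - l ≠ 0 := hbound.mono fun y hy => norm_pos_iff.1 (hε.trans_le hy)
  rw [mem_resolventSet_iff_isUnit_sub]
  refine ⟨⟨_, mulOp ν hmem.toLp, ?_, ?_⟩, rfl⟩
  · refine ContinuousLinearMap.ext fun g => Lp.ext ?_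
    filter_upwards [coeFn_mulOp_sub_algebraMap h l (mulOp ν hmem.toLp g), hinv g, hne]
      with y hy hy' hy0
    rw [mul_apply_eq_comp, one_apply_eq_self, hy, hy', mul_inv_cancel_left₀ hy0]
  · refine ContinuousLinearMap.ext fun g => Lp.ext ?_
    filter_upwards [coeFn_mulOp_sub_algebraMap h l g,
      hinv ((mulOp ν h - algebraMap ℂ (Lp ℂ 2 ν →L[ℂ] Lp ℂ 2 ν) l) g), hne] with y hy hy' hy0
    rw [mul_apply_eq_comp, one_apply_eq_self, hy', hy, inv_mul_cancel_left₀ hy0]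

theorem exists_one_sub_smul_mulOp_mul_eq {h : Lp ℂ ∞ ν} {τ : ℂ} (hτ : τ ≠ 0) {ε : ℝ} (hε : 0 < ε)
    (hbound : ∀ᵐ y ∂ν, ε ≤ ‖h y - τ⁻¹‖) :
    ∃ R : Lp ℂ 2 ν →L[ℂ] Lp ℂ 2 ν, (1 - τ • mulOp ν h) * R = mulOp ν h ∧
      ∀ g, R g =ᵐ[ν] fun y => h y / (1 - τ * h y) * g y := by
  obtain ⟨B, hB⟩ :=
    ((inv_mem_resolventSet_iff hτ).1 (mem_resolventSet_mulOp hε hbound)).exists_right_inv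
  have hR : (1 - τ • mulOp ν h) * (B * mulOp ν h) = mulOp ν h := by rw [← mul_assoc, hB, one_mul]
  refine ⟨B * mulOp ν h, hR, fun g => ?_⟩
  set r := (B * mulOp ν h) g
  have hr : r - τ • mulOp ν h r = mulOp ν h g := DFunLike.congr_fun hR g
  filter_upwards [hbound, coeFn_mulOp h r, coeFn_mulOp h g, Lp.coeFn_sub r (τ • mulOp ν h r),
    Lp.coeFn_smul τ (mulOp ν h r)] with y hy hhr hhg hsub hsmul
  have hne : 1 - τ * h y ≠ 0 := fun hzero => by
    rw [eq_inv_of_mul_eq_one_right (sub_eq_zero.1 hzero).symm, sub_self, norm_zero] at hy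
    exact hε.not_ge hy
  rw [hr, hhg, Pi.sub_apply, hsmul, Pi.smul_apply, hhr, smul_eq_mul] at hsub
  rw [div_mul_eq_mul_div, eq_div_iff hne, hsub]
  ring

theorem exists_ae_le_norm_sub_of_mul_sub_one_mem_finiteRank [StandardBorelSpace Y] [SigmaFinite ν]
    [NullSingletonClass ν] {h : Lp ℂ ∞ ν} {l : ℂ} {C : Lp ℂ 2 ν →L[ℂ] Lp ℂ 2 ν}
    (hC : C * (mulOp ν h - algebraMap ℂ _ l) - 1 ∈ finiteRank ℂ (Lp ℂ 2 ν) (Lp ℂ 2 ν)) :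
    ∃ ε > 0, ∀ᵐ y ∂ν, ε ≤ ‖h y - l‖ := by
  rw [mem_finiteRank_iff] at hC
  set M := mulOp ν h - algebraMap ℂ (Lp ℂ 2 ν →L[ℂ] Lp ℂ 2 ν) l
  have hε : 0 < (‖C‖ + 1)⁻¹ := by positivity
  refine ⟨(‖C‖ + 1)⁻¹, hε, ?_⟩
  by_contra hsmall
  have hA : MeasurableSet {y | ‖h y - l‖ < (‖C‖ + 1)⁻¹} :=
    measurableSet_lt ((Lp.stronglyMeasurable h).measurable.sub_const l).norm measurable_const
  have hA0 : ν {y | ‖h y - l‖ < (‖C‖ + 1)⁻¹} ≠ 0 := by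
    simpa only [ae_iff, not_le] using hsmall
  obtain ⟨g, hg, hCg, hsupp⟩ := exists_ne_zero_ae_eq_zero_off hA hA0
    ((C * M - 1 : Lp ℂ 2 ν →L[ℂ] Lp ℂ 2 ν) : Lp ℂ 2 ν →ₗ[ℂ] Lp ℂ 2 ν).rangeRestrict
  have hCMg : C (M g) = g := sub_eq_zero.1 (congrArg Subtype.val hCg)
  have hMg : ‖M g‖ ≤ (‖C‖ + 1)⁻¹ * ‖g‖ := by
    refine Lp.norm_le_mul_norm_of_ae_le_mul ?_
    filter_upwards [coeFn_mulOp_sub_algebraMap h l g, hsupp] with y hy hysupp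
    rw [hy, norm_mul]
    by_cases hyA : ‖h y - l‖ < (‖C‖ + 1)⁻¹
    · gcongr
    · rw [hysupp hyA, norm_zero, mul_zero, mul_zero]
  have hlt : ‖g‖ < ‖g‖ := calc
    ‖g‖ = ‖C (M g)‖ := by rw [hCMg]
    _ ≤ ‖C‖ * ((‖C‖ + 1)⁻¹ * ‖g‖) := C.le_opNorm_of_le hMg
    _ < (‖C‖ + 1) * ((‖C‖ + 1)⁻¹ * ‖g‖) := by
      have := norm_pos_iff.2 hg
      gcongr
      exact lt_add_one _
    _ = ‖g‖ := mul_inv_cancel_left₀ (by positivity) _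
  exact lt_irrefl _ hlt

end MulOp

section Tensor

open scoped ENNReal InnerProductSpace

variable {X Y : Type*} [MeasurableSpace X] [MeasurableSpace Y] {μ : Measure X} {ν : Measure Y}

theorem memLp_two_tensor [SFinite ν] {u : X → ℂ} {v : Y → ℂ} (hu : MemLp u 2 μ)
    (hv : MemLp v 2 ν) : MemLp (fun z : X × Y => u z.1 * v z.2) 2 (μ.prod ν) := by
  have hmeas : AEStronglyMeasurable (fun z : X × Y => u z.1 * v z.2) (μ.prod ν) :=
    hu.1.comp_fst.mul hv.1.comp_snd
  rw [memLp_two_iff_integrable_sq_norm hmeas]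
  simpa only [norm_mul, mul_pow] using
    (hu.integrable_norm_pow (by norm_num)).mul_prod (hv.integrable_norm_pow (by norm_num))

variable [SFinite μ] [SFinite ν]

theorem inner_eq_inner_mul_inner_of_ae_eq {f f' : Lp ℂ 2 (μ.prod ν)} {u u' : Lp ℂ 2 μ}
    {v v' : Lp ℂ 2 ν} (hf : f =ᵐ[μ.prod ν] fun z => u z.1 * v z.2)
    (hf' : f' =ᵐ[μ.prod ν] fun z => u' z.1 * v' z.2) : ⟪f, f'⟫_ℂ = ⟪u, u'⟫_ℂ * ⟪v, v'⟫_ℂ := by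
  rw [L2.inner_def, L2.inner_def, L2.inner_def, ← integral_prod_mul]
  refine integral_congr_ae ?_
  filter_upwards [hf, hf'] with z hz hz'
  rw [hz, hz', RCLike.inner_apply, RCLike.inner_apply, RCLike.inner_apply, map_mul]
  ring

theorem norm_toLp_tensor (u : Lp ℂ 2 μ) (v : Lp ℂ 2 ν) :
    ‖(memLp_two_tensor (Lp.memLp u) (Lp.memLp v)).toLp‖ = ‖u‖ * ‖v‖ := by
  have hcoe := (memLp_two_tensor (Lp.memLp u) (Lp.memLp v)).coeFn_toLp
  have hinner := inner_eq_inner_mul_inner_of_ae_eq hcoe hcoe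
  simp only [inner_self_eq_norm_sq_to_K, ← mul_pow] at hinner
  exact (sq_eq_sq₀ (norm_nonneg _) (by positivity)).1 (by exact_mod_cast hinner)

variable (μ ν) in
/-- The elementary tensor `u ⊗ v`, i.e. the function `(x, y) ↦ u x * v y`, as a bounded bilinear
map on `L²` spaces. -/
def tensor : Lp ℂ 2 μ →L[ℂ] Lp ℂ 2 ν →L[ℂ] Lp ℂ 2 (μ.prod ν) :=
  LinearMap.mkContinuous₂
    (LinearMap.mk₂ ℂ (fun u v => (memLp_two_tensor (Lp.memLp u) (Lp.memLp v)).toLp)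
      (fun u u' v => by
        rw [← MemLp.toLp_add]
        refine MemLp.toLp_congr _ _ ?_
        filter_upwards [Measure.quasiMeasurePreserving_fst.ae (Lp.coeFn_add u u')] with z hz
        rw [Pi.add_apply, hz, Pi.add_apply, add_mul])
      (fun c u v => by
        rw [← MemLp.toLp_const_smul]
        refine MemLp.toLp_congr _ _ ?_
        filter_upwards [Measure.quasiMeasurePreserving_fst.ae (Lp.coeFn_smul c u)] with z hz
        rw [Pi.smul_apply, hz, Pi.smul_apply, smul_mul_assoc])
      (fun u v v' => by
        rw [← MemLp.toLp_add]
        refine MemLp.toLp_congr _ _ ?_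
        filter_upwards [Measure.quasiMeasurePreserving_snd.ae (Lp.coeFn_add v v')] with z hz
        rw [Pi.add_apply, hz, Pi.add_apply, mul_add])
      (fun c u v => by
        rw [← MemLp.toLp_const_smul]
        refine MemLp.toLp_congr _ _ ?_
        filter_upwards [Measure.quasiMeasurePreserving_snd.ae (Lp.coeFn_smul c v)] with z hz
        rw [Pi.smul_apply, hz, Pi.smul_apply, mul_smul_comm]))
    1 fun u v => by rw [one_mul, LinearMap.mk₂_apply, norm_toLp_tensor]

theorem coeFn_tensor (u : Lp ℂ 2 μ) (v : Lp ℂ 2 ν) :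
    tensor μ ν u v =ᵐ[μ.prod ν] fun z => u z.1 * v z.2 :=
  (memLp_two_tensor (Lp.memLp u) (Lp.memLp v)).coeFn_toLp

theorem inner_tensor_tensor (u u' : Lp ℂ 2 μ) (v v' : Lp ℂ 2 ν) :
    ⟪tensor μ ν u v, tensor μ ν u' v'⟫_ℂ = ⟪u, u'⟫_ℂ * ⟪v, v'⟫_ℂ :=
  inner_eq_inner_mul_inner_of_ae_eq (coeFn_tensor u v) (coeFn_tensor u' v')

theorem adjoint_tensor_apply_tensor (u w : Lp ℂ 2 μ) (v : Lp ℂ 2 ν) :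
    (tensor μ ν u).adjoint (tensor μ ν w v) = ⟪u, w⟫_ℂ • v :=
  ext_inner_left ℂ fun g => by
    rw [ContinuousLinearMap.adjoint_inner_right, inner_tensor_tensor, inner_smul_right]

theorem adjoint_flip_tensor_apply_tensor (u : Lp ℂ 2 μ) (v w : Lp ℂ 2 ν) :
    ((tensor μ ν).flip v).adjoint (tensor μ ν u w) = ⟪v, w⟫_ℂ • u :=
  ext_inner_left ℂ fun g => by
    rw [ContinuousLinearMap.adjoint_inner_right, ContinuousLinearMap.flip_apply,
      inner_tensor_tensor, inner_smul_right, mul_comm]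

theorem adjoint_tensor_comp_tensor {ι : Type*} [DecidableEq ι] {φ : ι → Lp ℂ 2 μ}
    (hφ : Orthonormal ℂ φ) (i j : ι) :
    (tensor μ ν (φ i)).adjoint ∘L tensor μ ν (φ j) = if i = j then 1 else 0 := by
  ext1 v
  rw [ContinuousLinearMap.comp_apply, adjoint_tensor_apply_tensor, orthonormal_iff_ite.1 hφ i j]
  split_ifs <;> simp

theorem adjoint_flip_tensor_comp_flip_tensor {ι : Type*} [DecidableEq ι] {ψ : ι → Lp ℂ 2 ν}
    (hψ : Orthonormal ℂ ψ) (i j : ι) :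
    ((tensor μ ν).flip (ψ i)).adjoint ∘L (tensor μ ν).flip (ψ j) = if i = j then 1 else 0 := by
  ext1 u
  rw [ContinuousLinearMap.comp_apply, ContinuousLinearMap.flip_apply,
    adjoint_flip_tensor_apply_tensor, orthonormal_iff_ite.1 hψ i j]
  split_ifs <;> simp

theorem adjoint_tensor_comp_flip_tensor_mem_finiteRank (u : Lp ℂ 2 μ) (v : Lp ℂ 2 ν) :
    (tensor μ ν u).adjoint ∘L (tensor μ ν).flip v ∈ finiteRank ℂ (Lp ℂ 2 μ) (Lp ℂ 2 ν) :=
  mem_finiteRank_of_range_le (Submodule.span ℂ {v}) fun w => Submodule.mem_span_singleton.2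
    ⟨⟪u, w⟫_ℂ, (adjoint_tensor_apply_tensor u w v).symm⟩

theorem adjoint_flip_tensor_comp_tensor_mem_finiteRank (u : Lp ℂ 2 μ) (v : Lp ℂ 2 ν) :
    ((tensor μ ν).flip v).adjoint ∘L tensor μ ν u ∈ finiteRank ℂ (Lp ℂ 2 ν) (Lp ℂ 2 μ) :=
  mem_finiteRank_of_range_le (Submodule.span ℂ {u}) fun w => Submodule.mem_span_singleton.2
    ⟨⟪v, w⟫_ℂ, (adjoint_flip_tensor_apply_tensor u v w).symm⟩

end Tensor

theorem integral_sum_mul_star_mul {ι X : Type*} [Fintype ι] [MeasurableSpace X] {μ : Measure X}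
    {φ : ι → X → ℂ} (hφ : ∀ i, MemLp (φ i) 2 μ) (c : ι → ℂ) {g : X → ℂ} (hg : MemLp g 2 μ) :
    ∫ s, (∑ i, c i * star (φ i s)) * g s ∂μ = ∑ i, c i * ∫ s, star (φ i s) * g s ∂μ := by
  have hint : ∀ i, Integrable (fun s => c i * (star (φ i s) * g s)) μ := fun i =>
    ((hφ i).star.integrable_mul hg).const_mul _
  simp only [Finset.sum_mul, mul_assoc]
  rw [integral_finsetSum _ fun i _ => hint i]
  simp only [integral_const_mul]

section PartialInner

variable {X Y : Type*} [MeasurableSpace X] [MeasurableSpace Y] {μ : Measure X} {ν : Measure Y}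

theorem coeFn_adjoint_tensor [SFinite μ] [SigmaFinite ν] (u : Lp ℂ 2 μ)
    (f : Lp ℂ 2 (μ.prod ν)) :
    (tensor μ ν u).adjoint f =ᵐ[ν] fun y => ∫ s, star (u s) * f (s, y) ∂μ := by
  have hintegral : ∀ A : Set Y, MeasurableSet A → ν A < ⊤ →
      IntegrableOn (fun y => ∫ s, star (u s) * f (s, y) ∂μ) A ν ∧
      ∫ y in A, (tensor μ ν u).adjoint f y ∂ν = ∫ y in A, ∫ s, star (u s) * f (s, y) ∂μ ∂ν := by
    intro A hA hA_top
    have hinner : ∀ᵐ z ∂μ.prod ν,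
        inner ℂ (tensor μ ν u (indicatorConstLp 2 hA hA_top.ne 1) z) (f z)
          = A.indicator (fun y => star (u z.1) * f (z.1, y)) z.2 := by
      have hone : indicatorConstLp 2 hA hA_top.ne (1 : ℂ) =ᵐ[ν] A.indicator fun _ => 1 :=
        indicatorConstLp_coeFn
      filter_upwards [coeFn_tensor u (indicatorConstLp 2 hA hA_top.ne 1),
        Measure.quasiMeasurePreserving_snd.ae hone] with z hz hzA
      rw [hz, hzA]
      by_cases hmem : z.2 ∈ A <;> simp [hmem, mul_comm]
    have hint := (L2.integrable_inner (𝕜 := ℂ)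
      (tensor μ ν u (indicatorConstLp 2 hA hA_top.ne 1)) f).congr hinner
    have hslice : ∀ y, ∫ s, A.indicator (fun y => star (u s) * f (s, y)) y ∂μ
        = A.indicator (fun y => ∫ s, star (u s) * f (s, y) ∂μ) y := fun y => by
      by_cases hmem : y ∈ A <;> simp [hmem]
    refine ⟨(integrable_indicator_iff hA).1 (hint.integral_prod_right.congr
      (ae_of_all _ hslice)), ?_⟩
    rw [← L2.inner_indicatorConstLp_one (𝕜 := ℂ) hA hA_top.ne,
      ContinuousLinearMap.adjoint_inner_right, L2.inner_def,
      integral_congr_ae hinner, integral_prod_symm _ hint, ← integral_indicator hA]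
    exact integral_congr_ae (ae_of_all _ hslice)
  refine ae_eq_of_forall_setIntegral_eq_of_sigmaFinite (fun A _ hA_top => ?_)
    (fun A hA hA_top => (hintegral A hA hA_top).1) fun A hA hA_top => (hintegral A hA hA_top).2
  exact integrableOn_Lp_of_measure_ne_top _ one_le_two hA_top.ne

section Swap

variable [SFinite μ] [SFinite ν]

variable (μ ν) in
/-- The isometry `L²(μ × ν) → L²(ν × μ)` that exchanges the two variables. -/
def swapLp : Lp ℂ 2 (μ.prod ν) →ₗᵢ[ℂ] Lp ℂ 2 (ν.prod μ) :=
  Lp.compMeasurePreservingₗᵢ ℂ Prod.swap Measure.measurePreserving_swap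

theorem coeFn_swapLp (f : Lp ℂ 2 (μ.prod ν)) :
    swapLp μ ν f =ᵐ[ν.prod μ] fun z => f z.swap :=
  Lp.coeFn_compMeasurePreserving f Measure.measurePreserving_swap

theorem swapLp_tensor (u : Lp ℂ 2 μ) (v : Lp ℂ 2 ν) :
    swapLp μ ν (tensor μ ν u v) = tensor ν μ v u := by
  refine Lp.ext ?_
  filter_upwards [coeFn_swapLp (tensor μ ν u v), coeFn_tensor v u,
    Measure.measurePreserving_swap.quasiMeasurePreserving.ae (coeFn_tensor u v)] with z hz hz' hz''
  rw [hz, hz', hz'', Prod.fst_swap, Prod.snd_swap, mul_comm]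

theorem adjoint_flip_tensor (v : Lp ℂ 2 ν) (f : Lp ℂ 2 (μ.prod ν)) :
    ((tensor μ ν).flip v).adjoint f = (tensor ν μ v).adjoint (swapLp μ ν f) :=
  ext_inner_left ℂ fun u => by
    rw [ContinuousLinearMap.adjoint_inner_right, ContinuousLinearMap.adjoint_inner_right,
      ContinuousLinearMap.flip_apply, ← (swapLp μ ν).inner_map_map, swapLp_tensor]

end Swap

theorem coeFn_adjoint_flip_tensor [SigmaFinite μ] [SFinite ν] (v : Lp ℂ 2 ν)
    (f : Lp ℂ 2 (μ.prod ν)) :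
    ((tensor μ ν).flip v).adjoint f =ᵐ[μ] fun x => ∫ t, star (v t) * f (x, t) ∂ν := by
  rw [adjoint_flip_tensor]
  filter_upwards [coeFn_adjoint_tensor v (swapLp μ ν f),
    Measure.ae_ae_of_ae_prod (Measure.measurePreserving_swap.quasiMeasurePreserving.ae
      (coeFn_swapLp f))] with x hx hswap
  rw [hx]
  refine integral_congr_ae ?_
  filter_upwards [hswap] with t ht
  simpa using congrArg (star (v t) * ·) ht

theorem ae_memLp_prodMk_left [SFinite μ] [SFinite ν] (f : Lp ℂ 2 (μ.prod ν)) :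
    ∀ᵐ x ∂μ, MemLp (fun t => f (x, t)) 2 ν := by
  have hf := Lp.memLp f
  filter_upwards [(hf.integrable_norm_pow (by norm_num)).prod_right_ae, hf.1.prodMk_left]
    with x hint hmeas
  rw [memLp_two_iff_integrable_sq_norm hmeas]
  exact_mod_cast hint

theorem ae_memLp_prodMk_right [SFinite μ] [SFinite ν] (f : Lp ℂ 2 (μ.prod ν)) :
    ∀ᵐ y ∂ν, MemLp (fun s => f (s, y)) 2 μ := by
  have hf := Lp.memLp f
  filter_upwards [(hf.integrable_norm_pow (by norm_num)).prod_left_ae, hf.1.prodMk_right]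
    with y hint hmeas
  rw [memLp_two_iff_integrable_sq_norm hmeas]
  exact_mod_cast hint

end PartialInner

section PartialIntegral

open scoped ENNReal InnerProductSpace

variable {X Y ι κ : Type*} [MeasurableSpace X] [MeasurableSpace Y] {μ : Measure X} {ν : Measure Y}
  [SFinite μ] [SFinite ν] [Fintype ι] [DecidableEq ι] [Fintype κ] [DecidableEq κ]

/-- The operator `∑ k, Aₖ ⊗ M k` on `L²(μ × ν)`, where `Aₖ` is the orthogonal projection of `L²(μ)`
onto the line through `φ k`. When `M k` is multiplication by `h k`, this is the partial integral
operator in the first variable with kernel `∑ k, φ k x * star (φ k s) * h k y`. -/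
def partialIntegralFst {φ : ι → Lp ℂ 2 μ} (hφ : Orthonormal ℂ φ) :
    (ι → Lp ℂ 2 ν →L[ℂ] Lp ℂ 2 ν) →ₙₐ[ℂ] (Lp ℂ 2 (μ.prod ν) →L[ℂ] Lp ℂ 2 (μ.prod ν)) :=
  amplification (fun k => tensor μ ν (φ k)) (fun k => (tensor μ ν (φ k)).adjoint)
    (adjoint_tensor_comp_tensor hφ)

/-- The analogue of `partialIntegralFst` with the two variables exchanged: the operator
`∑ j, N j ⊗ Bⱼ`, where `Bⱼ` is the orthogonal projection of `L²(ν)` onto the line through `ψ j`. -/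
def partialIntegralSnd {ψ : κ → Lp ℂ 2 ν} (hψ : Orthonormal ℂ ψ) :
    (κ → Lp ℂ 2 μ →L[ℂ] Lp ℂ 2 μ) →ₙₐ[ℂ] (Lp ℂ 2 (μ.prod ν) →L[ℂ] Lp ℂ 2 (μ.prod ν)) :=
  amplification (fun j => (tensor μ ν).flip (ψ j)) (fun j => ((tensor μ ν).flip (ψ j)).adjoint)
    (adjoint_flip_tensor_comp_flip_tensor hψ)

section FiniteRank

variable {φ : ι → Lp ℂ 2 μ} (hφ : Orthonormal ℂ φ) {ψ : κ → Lp ℂ 2 ν} (hψ : Orthonormal ℂ ψ)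
  (M : ι → Lp ℂ 2 ν →L[ℂ] Lp ℂ 2 ν) (N : κ → Lp ℂ 2 μ →L[ℂ] Lp ℂ 2 μ)

theorem partialIntegralFst_comp_flip_tensor_mem_finiteRank (v : Lp ℂ 2 ν) :
    partialIntegralFst hφ M ∘L (tensor μ ν).flip v ∈
      finiteRank ℂ (Lp ℂ 2 μ) (Lp ℂ 2 (μ.prod ν)) :=
  amplification_comp_mem_finiteRank _ M fun k =>
    adjoint_tensor_comp_flip_tensor_mem_finiteRank (φ k) v

theorem partialIntegralSnd_comp_tensor_mem_finiteRank (u : Lp ℂ 2 μ) :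
    partialIntegralSnd hψ N ∘L tensor μ ν u ∈ finiteRank ℂ (Lp ℂ 2 ν) (Lp ℂ 2 (μ.prod ν)) :=
  amplification_comp_mem_finiteRank _ N fun j =>
    adjoint_flip_tensor_comp_tensor_mem_finiteRank u (ψ j)

theorem partialIntegralFst_mul_partialIntegralSnd_mem_finiteRank :
    partialIntegralFst hφ M * partialIntegralSnd hψ N ∈
      finiteRank ℂ (Lp ℂ 2 (μ.prod ν)) (Lp ℂ 2 (μ.prod ν)) :=
  comp_amplification_mem_finiteRank _ N fun j =>
    partialIntegralFst_comp_flip_tensor_mem_finiteRank hφ M (ψ j)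

theorem add_comp_tensor_sub_mem_finiteRank (k : ι) :
    (partialIntegralFst hφ M + partialIntegralSnd hψ N) ∘L tensor μ ν (φ k)
      - tensor μ ν (φ k) ∘L M k ∈ finiteRank ℂ (Lp ℂ 2 ν) (Lp ℂ 2 (μ.prod ν)) := by
  have hfst : partialIntegralFst hφ M ∘L tensor μ ν (φ k) = tensor μ ν (φ k) ∘L M k :=
    amplification_comp _ M k
  rw [ContinuousLinearMap.add_comp, hfst, add_sub_cancel_left]
  exact partialIntegralSnd_comp_tensor_mem_finiteRank hψ N (φ k)

theorem add_comp_flip_tensor_sub_mem_finiteRank (j : κ) :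
    (partialIntegralFst hφ M + partialIntegralSnd hψ N) ∘L (tensor μ ν).flip (ψ j)
      - (tensor μ ν).flip (ψ j) ∘L N j ∈ finiteRank ℂ (Lp ℂ 2 μ) (Lp ℂ 2 (μ.prod ν)) := by
  have hsnd : partialIntegralSnd hψ N ∘L (tensor μ ν).flip (ψ j)
      = (tensor μ ν).flip (ψ j) ∘L N j := amplification_comp _ N j
  rw [ContinuousLinearMap.add_comp, hsnd, add_sub_cancel_right]
  exact partialIntegralFst_comp_flip_tensor_mem_finiteRank hφ M (ψ j)

theorem add_comp_tensor_mem_finiteRank_of_inner_eq_zero {u : Lp ℂ 2 μ}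
    (hu : ∀ k, ⟪φ k, u⟫_ℂ = 0) :
    (partialIntegralFst hφ M + partialIntegralSnd hψ N) ∘L tensor μ ν u ∈
      finiteRank ℂ (Lp ℂ 2 ν) (Lp ℂ 2 (μ.prod ν)) := by
  have hfst : partialIntegralFst hφ M ∘L tensor μ ν u = 0 := by
    ext1 v
    simp [partialIntegralFst, amplification_apply, adjoint_tensor_apply_tensor, hu]
  rw [ContinuousLinearMap.add_comp, hfst, zero_add]
  exact partialIntegralSnd_comp_tensor_mem_finiteRank hψ N u

end FiniteRank

end PartialIntegral

section Spectrum

open scoped ENNReal InnerProductSpace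

section Embedding

variable {Y H : Type*} [MeasurableSpace Y] [StandardBorelSpace Y] {ν : Measure Y} [SigmaFinite ν]
  [NullSingletonClass ν] [NormedAddCommGroup H] {l : ℂ} {h : Lp ℂ ∞ ν}

theorem exists_ae_le_norm_sub_of_mem_resolventSet_add [NormedSpace ℂ H] {T K : H →L[ℂ] H}
    (hK : K ∈ finiteRank ℂ H H) (hTK : l ∈ resolventSet ℂ (T + K)) {J : Lp ℂ 2 ν →L[ℂ] H}
    {V : H →L[ℂ] Lp ℂ 2 ν} (hVJ : V ∘L J = 1)
    (hTJ : T ∘L J - J ∘L mulOp ν h ∈ finiteRank ℂ (Lp ℂ 2 ν) H) :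
    ∃ ε > 0, ∀ᵐ y ∂ν, ε ≤ ‖h y - l‖ := by
  obtain ⟨C, hC⟩ := exists_mul_sub_one_mem_finiteRank hVJ hTJ hK hTK
  exact exists_ae_le_norm_sub_of_mul_sub_one_mem_finiteRank hC

theorem mem_resolventSet_mulOp_of_mem_discreteSpectrum [InnerProductSpace ℂ H] [CompleteSpace H]
    {T : H →L[ℂ] H} [IsStarNormal T] (hl : l ∈ discreteSpectrum T) {J : Lp ℂ 2 ν →L[ℂ] H}
    {V : H →L[ℂ] Lp ℂ 2 ν} (hVJ : V ∘L J = 1)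
    (hTJ : T ∘L J - J ∘L mulOp ν h ∈ finiteRank ℂ (Lp ℂ 2 ν) H) :
    l ∈ resolventSet ℂ (mulOp ν h) := by
  obtain ⟨K, hK, hTK⟩ := exists_finiteRank_of_mem_discreteSpectrum hl
  obtain ⟨ε, hε, hbound⟩ := exists_ae_le_norm_sub_of_mem_resolventSet_add hK hTK hVJ hTJ
  exact mem_resolventSet_mulOp hε hbound

end Embedding

variable {X Y ι κ : Type*} [MeasurableSpace X] [MeasurableSpace Y] {μ : Measure X} {ν : Measure Y}
  [SigmaFinite μ] [SigmaFinite ν] [Fintype ι] [DecidableEq ι] [Fintype κ] [DecidableEq κ]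
  {φ : ι → Lp ℂ 2 μ} (hφ : Orthonormal ℂ φ) {ψ : κ → Lp ℂ 2 ν} (hψ : Orthonormal ℂ ψ)

theorem mem_resolventSet_partialIntegralFst [StandardBorelSpace Y] [NullSingletonClass ν]
    {h : ι → Lp ℂ ∞ ν} {l : ℂ} (hl : l ≠ 0)
    {N : κ → Lp ℂ 2 μ →L[ℂ] Lp ℂ 2 μ}
    [IsStarNormal (partialIntegralFst hφ (fun k => mulOp ν (h k)) + partialIntegralSnd hψ N)]
    (hmem : l ∈ discreteSpectrum
      (partialIntegralFst hφ (fun k => mulOp ν (h k)) + partialIntegralSnd hψ N)) :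
    l ∈ resolventSet ℂ (partialIntegralFst (μ := μ) hφ fun k => mulOp ν (h k)) :=
  mem_resolventSet_amplification _ hl fun k =>
    mem_resolventSet_mulOp_of_mem_discreteSpectrum hmem
      ((adjoint_tensor_comp_tensor hφ k k).trans (if_pos rfl))
      (add_comp_tensor_sub_mem_finiteRank hφ hψ _ _ k)

theorem mem_resolventSet_partialIntegralSnd [StandardBorelSpace X] [NullSingletonClass μ]
    {p : κ → Lp ℂ ∞ μ} {l : ℂ} (hl : l ≠ 0)
    {M : ι → Lp ℂ 2 ν →L[ℂ] Lp ℂ 2 ν}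
    [IsStarNormal (partialIntegralFst hφ M + partialIntegralSnd hψ fun j => mulOp μ (p j))]
    (hmem : l ∈ discreteSpectrum
      (partialIntegralFst hφ M + partialIntegralSnd hψ fun j => mulOp μ (p j))) :
    l ∈ resolventSet ℂ (partialIntegralSnd (ν := ν) hψ fun j => mulOp μ (p j)) :=
  mem_resolventSet_amplification _ hl fun j =>
    mem_resolventSet_mulOp_of_mem_discreteSpectrum hmem
      ((adjoint_flip_tensor_comp_flip_tensor hψ j j).trans (if_pos rfl))
      (add_comp_flip_tensor_sub_mem_finiteRank hφ hψ _ _ j)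

theorem ne_zero_of_mem_discreteSpectrum [StandardBorelSpace X] [NullSingletonClass μ]
    [StandardBorelSpace Y] [NullSingletonClass ν] (hμ : μ ≠ 0) (hν : ν ≠ 0) {l : ℂ}
    {M : ι → Lp ℂ 2 ν →L[ℂ] Lp ℂ 2 ν} {N : κ → Lp ℂ 2 μ →L[ℂ] Lp ℂ 2 μ}
    [IsStarNormal (partialIntegralFst hφ M + partialIntegralSnd hψ N)]
    (hmem : l ∈ discreteSpectrum (partialIntegralFst hφ M + partialIntegralSnd hψ N)) : l ≠ 0 := by
  obtain ⟨u, hu, hφu, -⟩ := exists_ne_zero_ae_eq_zero_off MeasurableSet.univ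
    (Measure.measure_univ_ne_zero.2 hμ) (LinearMap.pi fun k => (innerSL ℂ (φ k)).toLinearMap)
  obtain ⟨g, hg, -, -⟩ := exists_ne_zero_ae_eq_zero_off (r := 2) MeasurableSet.univ
    (Measure.measure_univ_ne_zero.2 hν) (0 : Lp ℂ 2 ν →ₗ[ℂ] ℂ)
  have : Nontrivial (Lp ℂ 2 ν) := ⟨g, 0, hg⟩
  have hVJ : ((⟪u, u⟫_ℂ)⁻¹ • (tensor μ ν u).adjoint) ∘L tensor μ ν u = 1 := by
    ext1 v
    rw [ContinuousLinearMap.comp_apply, smul_apply, adjoint_tensor_apply_tensor,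
      inv_smul_smul₀ (inner_self_ne_zero.2 hu), one_apply_eq_self]
  have hres : l ∈ resolventSet ℂ (mulOp ν 0) := by
    refine mem_resolventSet_mulOp_of_mem_discreteSpectrum hmem hVJ ?_
    rw [map_zero, ContinuousLinearMap.comp_zero, sub_zero]
    exact add_comp_tensor_mem_finiteRank_of_inner_eq_zero hφ hψ M N fun k => congrFun hφu k
  rintro rfl
  rw [mem_resolventSet_iff_isUnit_sub, map_zero, map_zero, sub_zero] at hres
  exact not_isUnit_zero hres

theorem exists_ae_le_norm_sub_of_mem_resolventSet_partialIntegralFst [StandardBorelSpace Y]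
    [NullSingletonClass ν] {h : ι → Lp ℂ ∞ ν} {l : ℂ}
    (hl : l ∈ resolventSet ℂ (partialIntegralFst (μ := μ) hφ fun k => mulOp ν (h k))) (k : ι) :
    ∃ ε > 0, ∀ᵐ y ∂ν, ε ≤ ‖h k y - l‖ := by
  rw [← add_zero (partialIntegralFst hφ _)] at hl
  refine exists_ae_le_norm_sub_of_mem_resolventSet_add (zero_mem _) hl
    ((adjoint_tensor_comp_tensor hφ k k).trans (if_pos rfl)) ?_
  rw [partialIntegralFst, amplification_comp, sub_self]
  exact zero_mem _

theorem discreteSpectrum_add_eq_image_inv [StandardBorelSpace X] [NullSingletonClass μ]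
    [StandardBorelSpace Y] [NullSingletonClass ν] (hμ : μ ≠ 0) (hν : ν ≠ 0)
    {h : ι → Lp ℂ ∞ ν} {p : κ → Lp ℂ ∞ μ} {T₁ T₂ : Lp ℂ 2 (μ.prod ν) →L[ℂ] Lp ℂ 2 (μ.prod ν)}
    (hT₁ : T₁ = partialIntegralFst hφ fun k => mulOp ν (h k))
    (hT₂ : T₂ = partialIntegralSnd hψ fun j => mulOp μ (p j)) (hnormal : IsStarNormal (T₁ + T₂))
    {S W : ℂ → Lp ℂ 2 (μ.prod ν) →L[ℂ] Lp ℂ 2 (μ.prod ν)}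
    (hS : ∀ τ : ℂ, τ ≠ 0 → τ⁻¹ ∈ resolventSet ℂ T₁ → τ⁻¹ ∈ resolventSet ℂ T₂ →
      (1 - τ • T₁) * S τ = T₁)
    (hW : ∀ τ : ℂ, τ ≠ 0 → τ⁻¹ ∈ resolventSet ℂ T₁ → τ⁻¹ ∈ resolventSet ℂ T₂ →
      (1 - τ • T₂) * W τ = S τ * T₂) :
    discreteSpectrum (T₁ + T₂) = (fun τ => τ⁻¹) '' {τ | τ ≠ 0 ∧ τ⁻¹ ∈ resolventSet ℂ T₁ ∧
      τ⁻¹ ∈ resolventSet ℂ T₂ ∧ ∃ g, g ≠ 0 ∧ (τ ^ 2 • W τ) g = g} := by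
  have hfin : T₁ * T₂ ∈ finiteRank ℂ _ _ := by
    rw [hT₁, hT₂]
    exact partialIntegralFst_mul_partialIntegralSnd_mem_finiteRank hφ hψ _ _
  have hiff := fun τ hτ hres₁ hres₂ => inv_mem_discreteSpectrum_add_iff hfin hτ hres₁ hres₂
    (hS τ hτ hres₁ hres₂) (hW τ hτ hres₁ hres₂)
  ext l
  constructor
  · obtain ⟨τ, rfl⟩ : ∃ τ, τ⁻¹ = l := ⟨l⁻¹, inv_inv l⟩
    intro hmem
    have hinv : τ⁻¹ ≠ 0 ∧ τ⁻¹ ∈ resolventSet ℂ T₁ ∧ τ⁻¹ ∈ resolventSet ℂ T₂ := by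
      subst hT₁ hT₂
      have hne := ne_zero_of_mem_discreteSpectrum hφ hψ hμ hν hmem
      exact ⟨hne, mem_resolventSet_partialIntegralFst hφ hψ hne hmem,
        mem_resolventSet_partialIntegralSnd hφ hψ hne hmem⟩
    obtain ⟨hne, hres₁, hres₂⟩ := hinv
    have hτ : τ ≠ 0 := inv_eq_zero.not.1 hne
    exact ⟨τ, ⟨hτ, hres₁, hres₂, (hiff τ hτ hres₁ hres₂).1 hmem⟩, rfl⟩
  · rintro ⟨τ, ⟨hτ, hres₁, hres₂, hg⟩, rfl⟩
    exact (hiff τ hτ hres₁ hres₂).2 hg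

end Spectrum

section IntegralFormula

open scoped ENNReal InnerProductSpace

variable {X Y ι : Type*} [MeasurableSpace X] [MeasurableSpace Y] {μ : Measure X} {ν : Measure Y}

theorem orthonormal_toLp_iff [DecidableEq ι] {φ : ι → X → ℂ} (hφ : ∀ k, MemLp (φ k) 2 μ) :
    Orthonormal ℂ (fun k => (hφ k).toLp) ↔
      ∀ i j, ∫ x, star (φ i x) * φ j x ∂μ = if i = j then 1 else 0 := by
  rw [orthonormal_iff_ite]
  refine forall₂_congr fun i j => ?_
  rw [L2.inner_def]
  refine Eq.congr_left (integral_congr_ae ?_)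
  filter_upwards [(hφ i).coeFn_toLp, (hφ j).coeFn_toLp] with x hi hj
  rw [hi, hj, RCLike.inner_apply, mul_comm]
  rfl

variable [SigmaFinite μ] [SigmaFinite ν]

theorem adjoint_tensor_toLp {u : X → ℂ} (hu : MemLp u 2 μ) (f : Lp ℂ 2 (μ.prod ν)) :
    (tensor μ ν hu.toLp).adjoint f =ᵐ[ν] fun y => ∫ s, star (u s) * f (s, y) ∂μ := by
  filter_upwards [coeFn_adjoint_tensor hu.toLp f] with y hy
  rw [hy]
  refine integral_congr_ae ?_
  filter_upwards [hu.coeFn_toLp] with s hs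
  rw [hs]

theorem adjoint_flip_tensor_toLp {v : Y → ℂ} (hv : MemLp v 2 ν) (f : Lp ℂ 2 (μ.prod ν)) :
    ((tensor μ ν).flip hv.toLp).adjoint f =ᵐ[μ] fun x => ∫ t, star (v t) * f (x, t) ∂ν := by
  filter_upwards [coeFn_adjoint_flip_tensor hv.toLp f] with x hx
  rw [hx]
  refine integral_congr_ae ?_
  filter_upwards [hv.coeFn_toLp] with t ht
  rw [ht]

variable [Fintype ι] [DecidableEq ι]

theorem eq_partialIntegralFst {φ : ι → X → ℂ} (hφ : ∀ k, MemLp (φ k) 2 μ)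
    (hφON : Orthonormal ℂ fun k => (hφ k).toLp) {c : ι → Y → ℂ}
    {M : ι → Lp ℂ 2 ν →L[ℂ] Lp ℂ 2 ν} (hM : ∀ k g, M k g =ᵐ[ν] fun y => c k y * g y)
    {T : Lp ℂ 2 (μ.prod ν) →L[ℂ] Lp ℂ 2 (μ.prod ν)}
    (hT : ∀ f, ∀ᵐ z ∂μ.prod ν,
      T f z = ∑ k, φ k z.1 * c k z.2 * ∫ s, star (φ k s) * f (s, z.2) ∂μ) :
    T = partialIntegralFst hφON M := by
  refine ContinuousLinearMap.ext fun f => Lp.ext ?_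
  have hterm : ∀ᵐ z ∂μ.prod ν, ∀ k,
      tensor μ ν (hφ k).toLp (M k ((tensor μ ν (hφ k).toLp).adjoint f)) z
        = φ k z.1 * c k z.2 * ∫ s, star (φ k s) * f (s, z.2) ∂μ := by
    refine ae_all_iff.2 fun k => ?_
    filter_upwards [coeFn_tensor (hφ k).toLp (M k ((tensor μ ν (hφ k).toLp).adjoint f)),
      Measure.quasiMeasurePreserving_fst.ae (hφ k).coeFn_toLp,
      Measure.quasiMeasurePreserving_snd.ae (hM k ((tensor μ ν (hφ k).toLp).adjoint f)),
      Measure.quasiMeasurePreserving_snd.ae (adjoint_tensor_toLp (hφ k) f)]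
      with z hz hφz hMz hadj
    rw [hz, hφz, hMz, hadj, mul_assoc]
  filter_upwards [hT f, hterm, Lp.coeFn_fun_finsetSum Finset.univ fun k =>
    tensor μ ν (hφ k).toLp (M k ((tensor μ ν (hφ k).toLp).adjoint f))] with z hTz hterm hsum
  simp only [hterm] at hsum
  rw [hTz, ← hsum, partialIntegralFst, amplification_apply, sum_apply]
  rfl

theorem eq_partialIntegralSnd {ψ : ι → Y → ℂ} (hψ : ∀ j, MemLp (ψ j) 2 ν)
    (hψON : Orthonormal ℂ fun j => (hψ j).toLp) {c : ι → X → ℂ}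
    {N : ι → Lp ℂ 2 μ →L[ℂ] Lp ℂ 2 μ} (hN : ∀ j g, N j g =ᵐ[μ] fun x => c j x * g x)
    {T : Lp ℂ 2 (μ.prod ν) →L[ℂ] Lp ℂ 2 (μ.prod ν)}
    (hT : ∀ f, ∀ᵐ z ∂μ.prod ν,
      T f z = ∑ j, c j z.1 * ψ j z.2 * ∫ t, star (ψ j t) * f (z.1, t) ∂ν) :
    T = partialIntegralSnd hψON N := by
  refine ContinuousLinearMap.ext fun f => Lp.ext ?_
  have hterm : ∀ᵐ z ∂μ.prod ν, ∀ j,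
      tensor μ ν (N j (((tensor μ ν).flip (hψ j).toLp).adjoint f)) (hψ j).toLp z
        = c j z.1 * ψ j z.2 * ∫ t, star (ψ j t) * f (z.1, t) ∂ν := by
    refine ae_all_iff.2 fun j => ?_
    filter_upwards [coeFn_tensor (N j (((tensor μ ν).flip (hψ j).toLp).adjoint f)) (hψ j).toLp,
      Measure.quasiMeasurePreserving_snd.ae (hψ j).coeFn_toLp,
      Measure.quasiMeasurePreserving_fst.ae (hN j (((tensor μ ν).flip (hψ j).toLp).adjoint f)),
      Measure.quasiMeasurePreserving_fst.ae (adjoint_flip_tensor_toLp (hψ j) f)]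
      with z hz hψz hNz hadj
    rw [hz, hψz, hNz, hadj, mul_right_comm]
  filter_upwards [hT f, hterm, Lp.coeFn_fun_finsetSum Finset.univ fun j =>
    tensor μ ν (N j (((tensor μ ν).flip (hψ j).toLp).adjoint f)) (hψ j).toLp] with z hTz hterm hsum
  simp only [hterm] at hsum
  rw [hTz, ← hsum, partialIntegralSnd, amplification_apply, sum_apply]
  rfl

theorem eq_partialIntegralFst_mulOp {φ : ι → X → ℂ} (hφ : ∀ k, MemLp (φ k) 2 μ)
    (hφON : Orthonormal ℂ fun k => (hφ k).toLp) {h : ι → Y → ℂ} (hh : ∀ k, MemLp (h k) ∞ ν)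
    {T : Lp ℂ 2 (μ.prod ν) →L[ℂ] Lp ℂ 2 (μ.prod ν)}
    (hT : ∀ f, ∀ᵐ z ∂μ.prod ν,
      T f z = ∫ s, (∑ k, φ k z.1 * star (φ k s) * h k z.2) * f (s, z.2) ∂μ) :
    T = partialIntegralFst hφON fun k => mulOp ν (hh k).toLp := by
  refine eq_partialIntegralFst hφ hφON (c := h) (fun k g => ?_) fun f => ?_
  · filter_upwards [coeFn_mulOp (hh k).toLp g, (hh k).coeFn_toLp] with y hmul hcoe
    rw [hmul, hcoe]
  · filter_upwards [hT f, Measure.quasiMeasurePreserving_snd.ae (ae_memLp_prodMk_right f)]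
      with z hz hslice
    simp only [hz, mul_right_comm _ (star _)]
    exact integral_sum_mul_star_mul hφ _ hslice

theorem eq_partialIntegralSnd_mulOp {ψ : ι → Y → ℂ} (hψ : ∀ j, MemLp (ψ j) 2 ν)
    (hψON : Orthonormal ℂ fun j => (hψ j).toLp) {p : ι → X → ℂ} (hp : ∀ j, MemLp (p j) ∞ μ)
    {T : Lp ℂ 2 (μ.prod ν) →L[ℂ] Lp ℂ 2 (μ.prod ν)}
    (hT : ∀ f, ∀ᵐ z ∂μ.prod ν,
      T f z = ∫ t, (∑ j, p j z.1 * ψ j z.2 * star (ψ j t)) * f (z.1, t) ∂ν) :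
    T = partialIntegralSnd hψON fun j => mulOp μ (hp j).toLp := by
  refine eq_partialIntegralSnd hψ hψON (c := p) (fun j g => ?_) fun f => ?_
  · filter_upwards [coeFn_mulOp (hp j).toLp g, (hp j).coeFn_toLp] with x hmul hcoe
    rw [hmul, hcoe]
  · filter_upwards [hT f, Measure.quasiMeasurePreserving_fst.ae (ae_memLp_prodMk_left f)]
      with z hz hslice
    rw [hz]
    exact integral_sum_mul_star_mul hψ _ hslice

theorem one_sub_smul_partialIntegralFst_mul_eq [StandardBorelSpace Y] [NullSingletonClass ν]
    {φ : ι → X → ℂ} (hφ : ∀ k, MemLp (φ k) 2 μ) (hφON : Orthonormal ℂ fun k => (hφ k).toLp)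
    {h : ι → Y → ℂ} (hh : ∀ k, MemLp (h k) ∞ ν) {τ : ℂ} (hτ : τ ≠ 0)
    (hres : τ⁻¹ ∈ resolventSet ℂ (partialIntegralFst (μ := μ) hφON fun k => mulOp ν (hh k).toLp))
    {S : Lp ℂ 2 (μ.prod ν) →L[ℂ] Lp ℂ 2 (μ.prod ν)}
    (hS : ∀ f, ∀ᵐ z ∂μ.prod ν, S f z = ∑ k, h k z.2 / (1 - τ * h k z.2) *
      (φ k z.1 * ∫ s, star (φ k s) * f (s, z.2) ∂μ)) :
    (1 - τ • partialIntegralFst hφON fun k => mulOp ν (hh k).toLp) * S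
      = partialIntegralFst hφON fun k => mulOp ν (hh k).toLp := by
  choose ε hε hbound using exists_ae_le_norm_sub_of_mem_resolventSet_partialIntegralFst hφON hres
  choose R hR hRcoe using fun k => exists_one_sub_smul_mulOp_mul_eq hτ (hε k) (hbound k)
  have hSR : S = partialIntegralFst hφON R := by
    refine eq_partialIntegralFst hφ hφON (c := fun k y => h k y / (1 - τ * h k y))
      (fun k g => ?_) fun f => ?_
    · filter_upwards [hRcoe k g, (hh k).coeFn_toLp] with y hRy hcoe
      rw [hRy, hcoe]
    · filter_upwards [hS f] with z hz
      rw [hz]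
      exact Finset.sum_congr rfl fun k _ => by ring
  rw [hSR]
  exact one_sub_smul_mul_amplification _ hR

end IntegralFormula

open scoped ENNReal in
theorem statement18_general {X Y ι κ : Type*} [MeasurableSpace X] [StandardBorelSpace X]
    [MeasurableSpace Y] [StandardBorelSpace Y] [Fintype ι] [DecidableEq ι] [Fintype κ]
    [DecidableEq κ] {μ : Measure X} {ν : Measure Y} [SigmaFinite μ] [SigmaFinite ν]
    [NullSingletonClass μ] [NullSingletonClass ν] (hμ : μ ≠ 0) (hν : ν ≠ 0)
    {φ : ι → X → ℂ} (hφ : ∀ k, MemLp (φ k) 2 μ)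
    (hφON : ∀ i j, ∫ x, star (φ i x) * φ j x ∂μ = if i = j then 1 else 0)
    {h : ι → Y → ℂ} (hh : ∀ k, MemLp (h k) ∞ ν)
    {ψ : κ → Y → ℂ} (hψ : ∀ j, MemLp (ψ j) 2 ν)
    (hψON : ∀ i j, ∫ y, star (ψ i y) * ψ j y ∂ν = if i = j then 1 else 0)
    {p : κ → X → ℂ} (hp : ∀ j, MemLp (p j) ∞ μ)
    {T₁ T₂ : Lp ℂ 2 (μ.prod ν) →L[ℂ] Lp ℂ 2 (μ.prod ν)} (hnormal : IsStarNormal (T₁ + T₂))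
    (hT₁ : ∀ f, ∀ᵐ z ∂μ.prod ν,
      T₁ f z = ∫ s, (∑ k, φ k z.1 * star (φ k s) * h k z.2) * f (s, z.2) ∂μ)
    (hT₂ : ∀ f, ∀ᵐ z ∂μ.prod ν,
      T₂ f z = ∫ t, (∑ j, p j z.1 * ψ j z.2 * star (ψ j t)) * f (z.1, t) ∂ν)
    {P : ι → Lp ℂ 2 (μ.prod ν) →L[ℂ] Lp ℂ 2 (μ.prod ν)}
    (hP : ∀ k f, ∀ᵐ z ∂μ.prod ν, P k f z = φ k z.1 * ∫ s, star (φ k s) * f (s, z.2) ∂μ)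
    {S W : ℂ → Lp ℂ 2 (μ.prod ν) →L[ℂ] Lp ℂ 2 (μ.prod ν)}
    (hS : ∀ τ : ℂ, τ ≠ 0 → τ⁻¹ ∈ resolventSet ℂ T₁ → τ⁻¹ ∈ resolventSet ℂ T₂ → ∀ f,
      ∀ᵐ z ∂μ.prod ν, S τ f z = ∑ k, h k z.2 / (1 - τ * h k z.2) * P k f z)
    (hW : ∀ τ : ℂ, τ ≠ 0 → τ⁻¹ ∈ resolventSet ℂ T₁ → τ⁻¹ ∈ resolventSet ℂ T₂ →
      (1 - τ • T₂) * W τ = S τ * T₂) :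
    discreteSpectrum (T₁ + T₂) = (fun τ => τ⁻¹) '' {τ | τ ≠ 0 ∧ τ⁻¹ ∈ resolventSet ℂ T₁ ∧
      τ⁻¹ ∈ resolventSet ℂ T₂ ∧ ∃ g, g ≠ 0 ∧ (τ ^ 2 • W τ) g = g} := by
  have hφON' := (orthonormal_toLp_iff hφ).2 hφON
  have hψON' := (orthonormal_toLp_iff hψ).2 hψON
  have hT₁_eq := eq_partialIntegralFst_mulOp hφ hφON' hh hT₁
  have hT₂_eq := eq_partialIntegralSnd_mulOp hψ hψON' hp hT₂
  refine discreteSpectrum_add_eq_image_inv hφON' hψON' hμ hν hT₁_eq hT₂_eq hnormal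
    (fun τ hτ hres₁ hres₂ => ?_) hW
  subst hT₁_eq
  refine one_sub_smul_partialIntegralFst_mul_eq hφ hφON' hh hτ hres₁ fun f => ?_
  filter_upwards [hS τ hτ hres₁ hres₂ f, ae_all_iff.2 fun k => hP k f] with z hSz hPz
  simp only [hSz, hPz]

theorem muI_ne_zero {a b : ℝ} (hab : a < b) : muI a b ≠ 0 := by
  simpa using hab

theorem memLp_top_ofReal {X : Type*} [MeasurableSpace X] {μ : Measure X} {g : X → ℝ}
    (hg : Measurable g) (hbdd : ∃ C, ∀ᵐ x ∂μ, |g x| ≤ C) :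
    MemLp (fun x => (g x : ℂ)) ⊤ μ := by
  obtain ⟨C, hC⟩ := hbdd
  exact memLp_top_of_bound (measurable_ofReal.comp hg).aestronglyMeasurable C
    (hC.mono fun x hx => (norm_real _).trans_le hx)

theorem statement18
    (a b c d : ℝ) (hab : a < b) (hcd : c < d)
    (n : ℕ) (hn : 1 ≤ n)
    (φ : Fin n → ℝ → ℂ)
    (hφL2 : ∀ k, MemLp (φ k) 2 (muI a b))
    (hφON : ∀ i j, ∫ x, star (φ i x) * φ j x ∂(muI a b) = if i = j then 1 else 0)
    (h : Fin n → ℝ → ℝ)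
    (hhmeas : ∀ k, Measurable (h k))
    (hhbdd : ∀ k, ∃ C : ℝ, ∀ᵐ y ∂(muI c d), |h k y| ≤ C)
    (m : ℕ) (hm : 1 ≤ m)
    (ψ : Fin m → ℝ → ℂ)
    (hψL2 : ∀ j, MemLp (ψ j) 2 (muI c d))
    (hψON : ∀ i j, ∫ y, star (ψ i y) * ψ j y ∂(muI c d) = if i = j then 1 else 0)
    (p : Fin m → ℝ → ℝ)
    (hpmeas : ∀ j, Measurable (p j))
    (hpbdd : ∀ j, ∃ C : ℝ, ∀ᵐ x ∂(muI a b), |p j x| ≤ C)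
    (T1 T2 : Lp ℂ 2 ((muI a b).prod (muI c d)) →L[ℂ] Lp ℂ 2 ((muI a b).prod (muI c d)))
    (hT1sa : IsSelfAdjoint T1) (hT2sa : IsSelfAdjoint T2)
    (hT1 : ∀ f : Lp ℂ 2 ((muI a b).prod (muI c d)),
      ∀ᵐ z ∂((muI a b).prod (muI c d)),
        T1 f z = ∫ s, (∑ k, φ k z.1 * star (φ k s) * (h k z.2 : ℂ)) * f (s, z.2) ∂(muI a b))
    (hT2 : ∀ f : Lp ℂ 2 ((muI a b).prod (muI c d)),
      ∀ᵐ z ∂((muI a b).prod (muI c d)),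
        T2 f z = ∫ t, (∑ j, (p j z.1 : ℂ) * ψ j z.2 * star (ψ j t)) * f (z.1, t) ∂(muI c d))
    -- the orthogonal projections `P k`
    (P : Fin n → (Lp ℂ 2 ((muI a b).prod (muI c d)) →L[ℂ] Lp ℂ 2 ((muI a b).prod (muI c d))))
    (hP : ∀ k, ∀ f : Lp ℂ 2 ((muI a b).prod (muI c d)),
      ∀ᵐ z ∂((muI a b).prod (muI c d)),
        P k f z = φ k z.1 * ∫ s, star (φ k s) * f (s, z.2) ∂(muI a b))
    -- the operators S₁(τ)
    (S1 : ℂ → (Lp ℂ 2 ((muI a b).prod (muI c d)) →L[ℂ] Lp ℂ 2 ((muI a b).prod (muI c d))))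
    (hS1 : ∀ τ : ℂ, τ ≠ 0 → τ⁻¹ ∈ resolventSet ℂ T1 → τ⁻¹ ∈ resolventSet ℂ T2 →
      ∀ f : Lp ℂ 2 ((muI a b).prod (muI c d)),
        ∀ᵐ z ∂((muI a b).prod (muI c d)),
          S1 τ f z = ∑ k, ((h k z.2 : ℂ) / (1 - τ * (h k z.2 : ℂ))) * P k f z)
    -- the operators W₁(τ) = (E-τT₂)⁻¹ S₁(τ) T₂
    (W1 : ℂ → (Lp ℂ 2 ((muI a b).prod (muI c d)) →L[ℂ] Lp ℂ 2 ((muI a b).prod (muI c d))))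
    (hW1 : ∀ τ : ℂ, τ ≠ 0 → τ⁻¹ ∈ resolventSet ℂ T1 → τ⁻¹ ∈ resolventSet ℂ T2 →
      (1 - τ • T2) * W1 τ = S1 τ * T2)
    -- the sets D(T) and R(T)
    (DT : Set ℂ)
    (hDT : DT = {τ : ℂ | τ ≠ 0 ∧ τ⁻¹ ∈ resolventSet ℂ T1 ∧ τ⁻¹ ∈ resolventSet ℂ T2 ∧
      ∃ g : Lp ℂ 2 ((muI a b).prod (muI c d)), g ≠ 0 ∧ (τ ^ 2 • W1 τ) g = g})
    -- the set D₀(T)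
    (D0 : Set ℂ) (hD0 : D0 = (fun τ : ℂ => τ⁻¹) '' DT) :
    discreteSpectrum (T1 + T2) = D0 := by
  rw [hD0, hDT]
  exact statement18_general (muI_ne_zero hab) (muI_ne_zero hcd) hφL2 hφON
    (fun k => memLp_top_ofReal (hhmeas k) (hhbdd k)) hψL2 hψON
    (fun j => memLp_top_ofReal (hpmeas j) (hpbdd j)) (hT1sa.add hT2sa).isStarNormal
    hT1 hT2 hP hS1 hW1
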